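/- arXiv:2509.03942 — 8 statements merged into one kernel-verified Lean document; each statement's English description precedes it below -/
import Mathlib

section
/- For every x ∈ ℝ and t > 0, the function p satisfies the Fokker–Planck equation ∂p/∂t (x, t) = −ν · ∂p/∂x (x, t) + D · ∂²p/∂x² (x, t). -/
/-!
With `z = x - η - ν t`, the kernel satisfies `∂ₓU = -z/(2Dt) · U`,
`∂ₓ²U = (z²/(4D²t²) - 1/(2Dt)) · U` and `∂ₜU = (-1/(2t) + ν z/(2Dt) + z²/(4Dt²)) · U`, so
`∂ₜU = -ν ∂ₓU + D ∂ₓ²U` for every source point `η`. The absorbing-boundary solution is a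
combination of two kernels with coefficients independent of `x` and `t`, hence solves the same
linear equation.
-/

open Real

/-- The free advection–diffusion kernel `U(x, t, η)`. -/
noncomputable def U (D ν : ℝ) (x t η : ℝ) : ℝ :=
  (1 / Real.sqrt (4 * Real.pi * D * t)) * Real.exp (-(x - η - ν * t) ^ 2 / (4 * D * t))

/-- The absorbing-boundary solution `p(x, t) = U(x, t, x₀) − e^{(ν/D)(L − x₀)} U(x, t, 2L − x₀)`. -/
noncomputable def pAbs (D ν L x₀ : ℝ) (x t : ℝ) : ℝ :=
  U D ν x t x₀ - Real.exp ((ν / D) * (L - x₀)) * U D ν x t (2 * L - x₀)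

lemma U_hasDerivAt_x (D ν t η x : ℝ) (hD : 0 < D) (ht : 0 < t) :
    HasDerivAt (fun y => U D ν y t η) (-(x - η - ν * t) / (2 * D * t) * U D ν x t η) x := by
  unfold U
  have h1 : HasDerivAt (fun y : ℝ => y - η - ν * t) 1 x :=
    ((hasDerivAt_id x).sub_const η).sub_const (ν * t)
  have h2 := ((((h1.pow 2).neg).div_const (4 * D * t)).exp).const_mul
    (1 / Real.sqrt (4 * Real.pi * D * t))
  refine h2.congr_deriv ?_
  simp only [Pi.pow_apply, Pi.neg_apply]
  field_simp
  push_cast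
  ring

lemma U_hasDerivAt_xx (D ν t η x : ℝ) (hD : 0 < D) (ht : 0 < t) :
    HasDerivAt (fun y => -(y - η - ν * t) / (2 * D * t) * U D ν y t η)
      (((x - η - ν * t) ^ 2 / (4 * D ^ 2 * t ^ 2) - 1 / (2 * D * t)) * U D ν x t η) x := by
  have h1 : HasDerivAt (fun y : ℝ => -(y - η - ν * t) / (2 * D * t)) (-1 / (2 * D * t)) x :=
    ((((hasDerivAt_id x).sub_const η).sub_const (ν * t)).neg).div_const _
  refine (h1.mul (U_hasDerivAt_x D ν t η x hD ht)).congr_deriv ?_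
  field_simp
  ring

lemma U_hasDerivAt_t (D ν t η x : ℝ) (hD : 0 < D) (ht : 0 < t) :
    HasDerivAt (fun τ => U D ν x τ η)
      ((-1 / (2 * t) + ν * (x - η - ν * t) / (2 * D * t)
        + (x - η - ν * t) ^ 2 / (4 * D * t ^ 2)) * U D ν x t η) t := by
  unfold U
  have hpos : 0 < 4 * Real.pi * D * t := by positivity
  have hs : Real.sqrt (4 * Real.pi * D * t) ≠ 0 := (Real.sqrt_pos.mpr hpos).ne'
  have hsq : Real.sqrt (4 * Real.pi * D * t) ^ 2 = 4 * Real.pi * D * t :=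
    Real.sq_sqrt hpos.le
  have hlin : HasDerivAt (fun τ : ℝ => 4 * Real.pi * D * τ) (4 * Real.pi * D) t := by
    simpa using (hasDerivAt_id t).const_mul (4 * Real.pi * D)
  have hpre : HasDerivAt (fun τ : ℝ => 1 / Real.sqrt (4 * Real.pi * D * τ))
      (-1 / (2 * t) * (1 / Real.sqrt (4 * Real.pi * D * t))) t := by
    have h := (hlin.sqrt hpos.ne').inv hs
    simp only [one_div]
    refine h.congr_deriv ?_
    rw [hsq]
    field_simp
  have hz : HasDerivAt (fun τ : ℝ => x - η - ν * τ) (-ν) t := by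
    simpa using ((hasDerivAt_id t).const_mul ν).const_sub (x - η)
  have hden : HasDerivAt (fun τ : ℝ => 4 * D * τ) (4 * D) t := by
    simpa using (hasDerivAt_id t).const_mul (4 * D)
  have hexp : HasDerivAt (fun τ : ℝ => Real.exp (-(x - η - ν * τ) ^ 2 / (4 * D * τ)))
      (Real.exp (-(x - η - ν * t) ^ 2 / (4 * D * t)) *
        (ν * (x - η - ν * t) / (2 * D * t) + (x - η - ν * t) ^ 2 / (4 * D * t ^ 2))) t := by
    have hne : 4 * D * t ≠ 0 := by positivity
    refine (((hz.pow 2).neg).div hden hne).exp.congr_deriv ?_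
    simp only [Pi.pow_apply, Pi.neg_apply, Pi.div_apply]
    congr 1
    field_simp
    push_cast
    ring
  refine (hpre.mul hexp).congr_deriv ?_
  ring

/-- For every `x ∈ ℝ` and `t > 0`, the absorbing-boundary solution satisfies the
Fokker–Planck equation `∂p/∂t = −ν ∂p/∂x + D ∂²p/∂x²`. -/
theorem pAbs_fokkerPlanck (D ν L x₀ : ℝ) (hD : 0 < D) (hx₀ : x₀ < L) :
    ∀ (x t : ℝ), 0 < t →
      deriv (fun τ => pAbs D ν L x₀ x τ) t =
        -ν * deriv (fun y => pAbs D ν L x₀ y t) x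
          + D * deriv (deriv (fun y => pAbs D ν L x₀ y t)) x := by
  intro x t ht
  have hx : ∀ y, HasDerivAt (fun y => pAbs D ν L x₀ y t) _ y := fun y =>
    (U_hasDerivAt_x D ν t x₀ y hD ht).sub
      ((U_hasDerivAt_x D ν t (2 * L - x₀) y hD ht).const_mul (Real.exp ((ν / D) * (L - x₀))))
  have hxx := (U_hasDerivAt_xx D ν t x₀ x hD ht).sub
      ((U_hasDerivAt_xx D ν t (2 * L - x₀) x hD ht).const_mul (Real.exp ((ν / D) * (L - x₀))))
  have htt : HasDerivAt (fun τ => pAbs D ν L x₀ x τ) _ t :=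
    (U_hasDerivAt_t D ν t x₀ x hD ht).sub
      ((U_hasDerivAt_t D ν t (2 * L - x₀) x hD ht).const_mul (Real.exp ((ν / D) * (L - x₀))))
  -- The first derivative is known at every point, so it can be differentiated again as a function.
  have hfun := funext fun y => (hx y).deriv
  have hsecond : HasDerivAt (deriv (fun y => pAbs D ν L x₀ y t)) _ x :=
    hxx.congr_of_eventuallyEq (Filter.Eventually.of_forall (congrFun hfun))
  rw [htt.deriv, (hx x).deriv, hsecond.deriv]
  -- What remains is a rational identity, linear in the two kernel values `u` and `v`.
  generalize U D ν x t x₀ = u, U D ν x t (2 * L - x₀) = v, Real.exp ((ν / D) * (L - x₀)) = w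
  field_simp
  ring
end

section
/- For every t > 0, the function p satisfies the absorbing boundary condition p(L, t) = 0. -/
open Real

/-- For every `t > 0`, the absorbing-boundary solution satisfies `p(L, t) = 0`. -/
theorem pAbs_boundary_condition (D ν L x₀ : ℝ) (hD : 0 < D) (hx₀ : x₀ < L) :
    ∀ t : ℝ, 0 < t → pAbs D ν L x₀ L t = 0 := by
  intro t ht
  -- With `a = L - x₀`, the exponents differ by `((a + νt)² - (a - νt)²) / (4Dt) = aν / D`.
  have key : -(L - x₀ - ν * t) ^ 2 / (4 * D * t)
      = (ν / D) * (L - x₀) + -(L - (2 * L - x₀) - ν * t) ^ 2 / (4 * D * t) := by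
    field_simp
    ring
  unfold pAbs U
  rw [key, Real.exp_add]
  ring
end

section
/- For every x < L and t > 0, the absorbing-boundary solution is strictly positive: p(x, t) > 0. -/
/-!
Both terms of `p` carry the same Gaussian prefactor, so positivity is a comparison of exponents.
Completing the squares, the exponent of the source term minus that of the weighted image term is
`(L - x₀)(L - x)/(D t)`: the drift cancels against the weight `e^{(ν/D)(L - x₀)}`, and the gap is
positive because `x` and `x₀` both lie to the left of `L`.
-/

open Real

/-- For every `x < L` and `t > 0`, the absorbing-boundary solution is strictly positive. -/
theorem pAbs_pos (D ν L x₀ : ℝ) (hD : 0 < D) (hx₀ : x₀ < L) :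
    ∀ (x t : ℝ), x < L → 0 < t → 0 < pAbs D ν L x₀ x t := by
  intro x t hx ht
  have key : -(x - x₀ - ν * t) ^ 2 / (4 * D * t)
      = (ν / D) * (L - x₀) + -(x - (2 * L - x₀) - ν * t) ^ 2 / (4 * D * t)
        + (L - x₀) * (L - x) / (D * t) := by
    field_simp
    ring
  have hgap : 0 < (L - x₀) * (L - x) / (D * t) :=
    div_pos (mul_pos (sub_pos.2 hx₀) (sub_pos.2 hx)) (mul_pos hD ht)
  have hC : 0 < 1 / Real.sqrt (4 * Real.pi * D * t) := by positivity
  unfold pAbs U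
  rw [sub_pos, mul_left_comm, ← Real.exp_add]
  exact mul_lt_mul_of_pos_left (Real.exp_lt_exp.2 (by linarith)) hC
end

section
/- The absorbing-boundary solution satisfies the Dirac delta initial condition at x₀: for every bounded continuous function f : ℝ → ℝ, the integral ∫_{−∞}^{L} f(x) · p(x, t) dx converges to f(x₀) as t → 0⁺. -/
/-!
After the substitution `x = η + ν t + √(4Dt) y`, the integral `∫ h(x) U(x, t, η) dx` becomes
`π^{-1/2} ∫ h(η + ν t + √(4Dt) y) e^{-y²} dy`. For `h` bounded, measurable and continuous at `η`,
dominated convergence gives the limit `h(η)` as `t → 0⁺` (`tendsto_integral_mul_U`). The theorem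
follows with `h = f · 1_{(-∞, L]}`, which is continuous at `x₀ < L` with value `f x₀`, and
continuous at the image point `2L - x₀ > L` with value `0`, so the image term vanishes.
-/

open Real MeasureTheory Filter Topology

/-- The kernel in the rescaled variable is the Gaussian `e^{-y²}`, up to normalization. -/
lemma sqrt_mul_U_rescaled {D t : ℝ} (hD : 0 < D) (ht : 0 < t) (ν η y : ℝ) :
    √(4 * D * t) * U D ν (η + ν * t + √(4 * D * t) * y) t η = (√π)⁻¹ * rexp (-1 * y ^ 2) := by
  have h4 : 0 < 4 * D * t := by positivity
  have hs : 0 < √(4 * D * t) := Real.sqrt_pos.2 h4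
  have hsq : √(4 * D * t) ^ 2 = 4 * D * t := Real.sq_sqrt h4.le
  have hpi : √(4 * π * D * t) = √π * √(4 * D * t) := by
    rw [← Real.sqrt_mul Real.pi_pos.le]
    congr 1
    ring
  have hexp : -(η + ν * t + √(4 * D * t) * y - η - ν * t) ^ 2 / (4 * D * t) = -1 * y ^ 2 := by
    rw [div_eq_iff h4.ne']
    linear_combination (-y ^ 2) * hsq
  have hp : 0 < √π := Real.sqrt_pos.2 Real.pi_pos
  unfold U
  rw [hexp, hpi]
  field_simp

lemma integral_mul_U_eq {D t : ℝ} (hD : 0 < D) (ht : 0 < t) (ν η : ℝ) (h : ℝ → ℝ) :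
    ∫ x, h x * U D ν x t η =
      ∫ y, h (η + ν * t + √(4 * D * t) * y) * ((√π)⁻¹ * rexp (-1 * y ^ 2)) := by
  have hs : 0 < √(4 * D * t) := Real.sqrt_pos.2 (by positivity)
  have hsub := Measure.integral_comp_mul_left
    (fun z => h (η + ν * t + z) * U D ν (η + ν * t + z) t η) (√(4 * D * t))
  rw [integral_add_left_eq_self (fun x => h x * U D ν x t η), abs_of_pos (inv_pos.2 hs),
    smul_eq_mul, eq_inv_mul_iff_mul_eq₀ hs.ne', ← integral_const_mul] at hsub
  rw [← hsub]
  congr 1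
  ext y
  rw [← sqrt_mul_U_rescaled hD ht ν η y]
  ring

lemma integrable_U {D t : ℝ} (hD : 0 < D) (ht : 0 < t) (ν η : ℝ) :
    Integrable (fun x => U D ν x t η) := by
  have hg : Integrable (fun x : ℝ => rexp (-(1 / (4 * D * t)) * x ^ 2)) :=
    integrable_exp_neg_mul_sq (by positivity)
  have hg' := (hg.comp_sub_right (η + ν * t)).const_mul (1 / √(4 * π * D * t))
  refine hg'.congr (Eventually.of_forall fun x => ?_)
  simp only [U]
  congr 2
  ring

/-- The free kernel is an approximate identity at `η`, also for test functions that are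
continuous only at `η`. -/
lemma tendsto_integral_mul_U {D : ℝ} (hD : 0 < D) (ν η : ℝ) {h : ℝ → ℝ} (hm : Measurable h)
    {M : ℝ} (hM : ∀ x, |h x| ≤ M) (hc : ContinuousAt h η) :
    Tendsto (fun t => ∫ x, h x * U D ν x t η) (𝓝[>] 0) (𝓝 (h η)) := by
  have hg : Integrable (fun y : ℝ => (√π)⁻¹ * rexp (-1 * y ^ 2)) :=
    (integrable_exp_neg_mul_sq one_pos).const_mul _
  have hp : 0 < √π := Real.sqrt_pos.2 Real.pi_pos
  have hlim : ∫ y : ℝ, h η * ((√π)⁻¹ * rexp (-1 * y ^ 2)) = h η := by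
    rw [integral_const_mul, integral_const_mul, integral_gaussian, div_one,
      inv_mul_cancel₀ hp.ne', mul_one]
  have key : Tendsto
      (fun t => ∫ y, h (η + ν * t + √(4 * D * t) * y) * ((√π)⁻¹ * rexp (-1 * y ^ 2)))
      (𝓝[>] 0) (𝓝 (∫ y : ℝ, h η * ((√π)⁻¹ * rexp (-1 * y ^ 2)))) := by
    refine tendsto_integral_filter_of_dominated_convergence
      (fun y => M * ((√π)⁻¹ * rexp (-1 * y ^ 2))) ?_ ?_ (hg.const_mul M) ?_
    · refine Eventually.of_forall fun t => Measurable.aestronglyMeasurable ?_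
      exact (hm.comp (by fun_prop)).mul (by fun_prop)
    · refine Eventually.of_forall fun t => Eventually.of_forall fun y => ?_
      have hpos : 0 ≤ (√π)⁻¹ * rexp (-1 * y ^ 2) := by positivity
      rw [Real.norm_eq_abs, abs_mul, abs_of_nonneg hpos]
      exact mul_le_mul_of_nonneg_right (hM _) hpos
    · refine Eventually.of_forall fun y => Tendsto.mul_const _ ?_
      have hcont : Continuous fun t : ℝ => η + ν * t + √(4 * D * t) * y := by fun_prop
      have harg : Tendsto (fun t : ℝ => η + ν * t + √(4 * D * t) * y) (𝓝[>] 0) (𝓝 η) := by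
        have h0 := hcont.tendsto 0
        simp only [mul_zero, Real.sqrt_zero, zero_mul, add_zero] at h0
        exact h0.mono_left nhdsWithin_le_nhds
      exact hc.tendsto.comp harg
  rw [hlim] at key
  refine key.congr' ?_
  filter_upwards [self_mem_nhdsWithin] with t ht
  exact (integral_mul_U_eq hD ht ν η h).symm

/-- The absorbing-boundary solution satisfies the Dirac delta initial condition at `x₀`:
for every bounded continuous `f : ℝ → ℝ`, `∫_{−∞}^{L} f(x) p(x, t) dx → f(x₀)` as `t → 0⁺`. -/
theorem pAbs_delta_initial_condition (D ν L x₀ : ℝ) (hD : 0 < D) (hx₀ : x₀ < L)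
    (f : ℝ → ℝ) (hf : Continuous f) (hbdd : ∃ M : ℝ, ∀ x : ℝ, |f x| ≤ M) :
    Tendsto (fun t : ℝ => ∫ x in Set.Iic L, f x * pAbs D ν L x₀ x t)
      (𝓝[>] 0) (𝓝 (f x₀)) := by
  obtain ⟨M, hM⟩ := hbdd
  set h : ℝ → ℝ := (Set.Iic L).indicator f with hh
  have hm : Measurable h := hf.measurable.indicator measurableSet_Iic
  have hhM : ∀ x, |h x| ≤ M := fun x =>
    (norm_indicator_le_norm_self f x).trans (hM x)
  have hev₀ : h =ᶠ[𝓝 x₀] f := by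
    filter_upwards [Iio_mem_nhds hx₀] with x hx
    exact Set.indicator_of_mem (Set.mem_Iic.2 (le_of_lt hx)) f
  have hevR : h =ᶠ[𝓝 (2 * L - x₀)] fun _ => 0 := by
    filter_upwards [Ioi_mem_nhds (show L < 2 * L - x₀ by linarith)] with x hx
    exact Set.indicator_of_notMem (Set.notMem_Iic.2 hx) f
  have lim₀ := tendsto_integral_mul_U hD ν x₀ hm hhM (hf.continuousAt.congr hev₀.symm)
  have limR := tendsto_integral_mul_U hD ν (2 * L - x₀) hm hhM
    (continuousAt_const.congr hevR.symm)
  have lim := lim₀.sub (limR.const_mul (rexp ((ν / D) * (L - x₀))))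
  rw [hev₀.eq_of_nhds, hevR.eq_of_nhds, mul_zero, sub_zero] at lim
  refine lim.congr' ?_
  filter_upwards [self_mem_nhdsWithin] with t ht
  have hint : ∀ η, Integrable (fun x => h x * U D ν x t η) := fun η =>
    (integrable_U hD ht ν η).bdd_mul hm.aestronglyMeasurable (Eventually.of_forall hhM)
  rw [← integral_const_mul, ← integral_sub (hint _) ((hint _).const_mul _),
    ← integral_indicator measurableSet_Iic]
  congr 1
  ext x
  rw [Set.indicator_mul_left, ← hh, pAbs]
  ring
end

section
/- For every x ∈ ℝ and t > 0, the Robin-boundary solution p = p₁ + p₂ + p₃ satisfies the Fokker–Planck equation ∂p/∂t (x, t) = −ν · ∂p/∂x (x, t) + D · ∂²p/∂x² (x, t). -/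
/-!
The Fokker–Planck equation `∂ₜf = -ν ∂ₓf + D ∂ₓ²f` is linear, so it suffices to solve it with each
of `p₁`, `p₂`, `p₃`. The kernel `U` satisfies it by direct differentiation, which settles `p₁` and
`p₂`. For `p₃`, differentiation under the integral sign is avoided: with `k = α / β`, `r = 2L - x₀`
and `s = √(4Dt)`, completing the square gives
`∫_r^∞ e^{k(η - r)} U(x, t, η) dη = π^{-1/2} e^{k(x - r - νt) + D k² t} T((r - x + νt - 2Dkt) / s)`,
where `T(w) = ∫_w^∞ e^{-z²} dz` (`integral_exp_mul_U`). Since `dT/dw = -e^{-w²}`, this closed form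
can also be differentiated directly (`solvesFP_tail`).
-/

open Real MeasureTheory

/-- First term of the Robin-boundary solution: `p₁(x, t) = U(x, t, x₀)`. -/
noncomputable def p1 (D ν x₀ : ℝ) (x t : ℝ) : ℝ := U D ν x t x₀

/-- Second term: `p₂(x, t) = e^{(ν/D)(L − x₀)} U(x, t, 2L − x₀)`. -/
noncomputable def p2 (D ν L x₀ : ℝ) (x t : ℝ) : ℝ :=
  Real.exp ((ν / D) * (L - x₀)) * U D ν x t (2 * L - x₀)

/-- Third term:
`p₃(x, t) = 2(α/β + ν/(2D)) e^{(ν/D)(L − x₀)} ∫_{2L − x₀}^{∞} e^{(α/β)(η − (2L − x₀))} U(x, t, η) dη`. -/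
noncomputable def p3 (D ν L x₀ α β : ℝ) (x t : ℝ) : ℝ :=
  2 * (α / β + ν / (2 * D)) * Real.exp ((ν / D) * (L - x₀)) *
    ∫ η in Set.Ici (2 * L - x₀), Real.exp ((α / β) * (η - (2 * L - x₀))) * U D ν x t η

/-- The Robin-boundary solution `p = p₁ + p₂ + p₃`. -/
noncomputable def pRobin (D ν L x₀ α β : ℝ) (x t : ℝ) : ℝ :=
  p1 D ν x₀ x t + p2 D ν L x₀ x t + p3 D ν L x₀ α β x t

/-- `f x t` is a classical solution of `∂ₜf = -ν ∂ₓf + D ∂ₓ²f` on `ℝ × (0, ∞)`. The partial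
derivatives are part of the data, so they really exist. -/
def SolvesFP (D ν : ℝ) (f : ℝ → ℝ → ℝ) : Prop :=
  ∃ ft fx fxx : ℝ → ℝ → ℝ, ∀ x t, 0 < t →
    HasDerivAt (fun τ => f x τ) (ft x t) t ∧ HasDerivAt (fun y => f y t) (fx x t) x ∧
    HasDerivAt (fun y => fx y t) (fxx x t) x ∧ ft x t = -ν * fx x t + D * fxx x t

lemma SolvesFP.add {D ν : ℝ} {f g : ℝ → ℝ → ℝ} (hf : SolvesFP D ν f) (hg : SolvesFP D ν g) :
    SolvesFP D ν (fun x t => f x t + g x t) := by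
  obtain ⟨ft, fx, fxx, hf⟩ := hf
  obtain ⟨gt, gx, gxx, hg⟩ := hg
  refine ⟨fun x t => ft x t + gt x t, fun x t => fx x t + gx x t,
    fun x t => fxx x t + gxx x t, fun x t ht => ?_⟩
  obtain ⟨f1, f2, f3, f4⟩ := hf x t ht
  obtain ⟨g1, g2, g3, g4⟩ := hg x t ht
  exact ⟨f1.add g1, f2.add g2, f3.add g3, by beta_reduce; rw [f4, g4]; ring⟩

lemma SolvesFP.const_mul {D ν : ℝ} {f : ℝ → ℝ → ℝ} (c : ℝ) (hf : SolvesFP D ν f) :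
    SolvesFP D ν (fun x t => c * f x t) := by
  obtain ⟨ft, fx, fxx, hf⟩ := hf
  refine ⟨fun x t => c * ft x t, fun x t => c * fx x t, fun x t => c * fxx x t, fun x t ht => ?_⟩
  obtain ⟨f1, f2, f3, f4⟩ := hf x t ht
  exact ⟨f1.const_mul c, f2.const_mul c, f3.const_mul c, by beta_reduce; rw [f4]; ring⟩

lemma SolvesFP.congr {D ν : ℝ} {f g : ℝ → ℝ → ℝ} (hf : SolvesFP D ν f)
    (h : ∀ x t, 0 < t → g x t = f x t) : SolvesFP D ν g := by
  obtain ⟨ft, fx, fxx, hf⟩ := hf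
  refine ⟨ft, fx, fxx, fun x t ht => ?_⟩
  obtain ⟨f1, f2, f3, f4⟩ := hf x t ht
  refine ⟨f1.congr_of_eventuallyEq ?_, ?_, f3, f4⟩
  · filter_upwards [lt_mem_nhds ht] with τ hτ using h x τ hτ
  · have : (fun y => g y t) = fun y => f y t := funext fun y => h y t ht
    rwa [this]

lemma SolvesFP.deriv_eq {D ν : ℝ} {f : ℝ → ℝ → ℝ} (hf : SolvesFP D ν f) {x t : ℝ} (ht : 0 < t) :
    deriv (fun τ => f x τ) t =
      -ν * deriv (fun y => f y t) x + D * deriv (deriv (fun y => f y t)) x := by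
  obtain ⟨ft, fx, fxx, hf⟩ := hf
  have hd : deriv (fun y => f y t) = fun y => fx y t := funext fun y => (hf y t ht).2.1.deriv
  obtain ⟨f1, -, f3, f4⟩ := hf x t ht
  rw [hd, f1.deriv, f3.deriv, f4]

lemma hasDerivAt_sqrt_four_mul {D t : ℝ} (hD : 0 < D) (ht : 0 < t) :
    HasDerivAt (fun τ => √(4 * D * τ)) (2 * D / √(4 * D * t)) t := by
  have h := ((hasDerivAt_id t).const_mul (4 * D)).sqrt (by simp; exact ⟨hD.ne', ht.ne'⟩)
  refine h.congr_deriv ?_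
  simp only [id]
  field_simp
  norm_num

/-- The kernel, written with `√(4Dt)` as the only irrational function of `t`. -/
lemma U_eq {D : ℝ} (ν x η : ℝ) {t : ℝ} (hD : 0 < D) (ht : 0 < t) :
    U D ν x t η =
      (√π)⁻¹ * ((√(4 * D * t))⁻¹ * exp (-((x - η - ν * t) / √(4 * D * t)) ^ 2)) := by
  have h4 : 0 ≤ 4 * D * t := by positivity
  rw [U, show 4 * π * D * t = π * (4 * D * t) by ring, Real.sqrt_mul pi_pos.le, div_pow,
    Real.sq_sqrt h4, neg_div]
  field_simp

lemma solvesFP_U {D : ℝ} (ν η : ℝ) (hD : 0 < D) : SolvesFP D ν (fun x t => U D ν x t η) := by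
  refine SolvesFP.congr (SolvesFP.const_mul (√π)⁻¹ ?_) (fun x t ht => U_eq ν x η hD ht)
  refine ⟨fun x t => (-(2 * D / √(4 * D * t)) / √(4 * D * t) ^ 2) *
        exp (-((x - η - ν * t) / √(4 * D * t)) ^ 2) +
      (√(4 * D * t))⁻¹ * (exp (-((x - η - ν * t) / √(4 * D * t)) ^ 2) *
        (-(2 * ((x - η - ν * t) / √(4 * D * t)) *
        ((-ν * √(4 * D * t) - (x - η - ν * t) * (2 * D / √(4 * D * t))) / √(4 * D * t) ^ 2)))),
    fun x t => (√(4 * D * t))⁻¹ * (exp (-((x - η - ν * t) / √(4 * D * t)) ^ 2) *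
      (-(2 * ((x - η - ν * t) / √(4 * D * t)) * (1 / √(4 * D * t))))),
    fun x t => (√(4 * D * t))⁻¹ * (exp (-((x - η - ν * t) / √(4 * D * t)) ^ 2) *
      (-(2 * ((x - η - ν * t) / √(4 * D * t)) * (1 / √(4 * D * t)))) *
      (-(2 * ((x - η - ν * t) / √(4 * D * t)) * (1 / √(4 * D * t)))) +
      exp (-((x - η - ν * t) / √(4 * D * t)) ^ 2) *
      (-(2 * (1 / √(4 * D * t)) * (1 / √(4 * D * t))))),
    fun x t ht => ?_⟩
  have hs : 0 < √(4 * D * t) := by positivity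
  have hds := hasDerivAt_sqrt_four_mul hD ht
  have hwx : HasDerivAt (fun y => (y - η - ν * t) / √(4 * D * t)) (1 / √(4 * D * t)) x :=
    (((hasDerivAt_id x).sub_const η).sub_const (ν * t)).div_const _
  have hnt : HasDerivAt (fun τ => x - η - ν * τ) (-ν) t := by
    simpa using ((hasDerivAt_id t).const_mul ν).const_sub (x - η)
  have hwt := hnt.div hds hs.ne'
  have hEx := ((hwx.pow 2).neg).exp
  refine ⟨?_, ?_, ?_, ?_⟩
  · refine (((hds.inv hs.ne').mul ((hwt.pow 2).neg).exp)).congr_deriv ?_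
    simp
  · refine (hEx.const_mul _).congr_deriv ?_
    simp
  · refine ((hEx.mul (((hwx.const_mul 2).mul_const _).neg)).const_mul _).congr_deriv ?_
    simp
  · have hst : t = √(4 * D * t) ^ 2 / (4 * D) := by
      rw [Real.sq_sqrt (by positivity)]; field_simp
    generalize exp (-((x - η - ν * t) / √(4 * D * t)) ^ 2) = E
    -- all dependence on `t` is rational in `s = √(4Dt)`
    generalize √(4 * D * t) = s at *
    subst hst
    field_simp
    ring

/-- The Gaussian tail `∫_w^∞ e^{-z²} dz`, i.e. `(√π / 2) erfc w`. -/
noncomputable def gaussTail (w : ℝ) : ℝ := ∫ z in Set.Ioi w, exp (-z ^ 2)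

lemma hasDerivAt_gaussTail (w : ℝ) : HasDerivAt gaussTail (-exp (-w ^ 2)) w := by
  have hi : Integrable (fun z : ℝ => exp (-z ^ 2)) := by
    simpa using integrable_exp_neg_mul_sq (b := 1) one_pos
  have hc : Continuous (fun z : ℝ => exp (-z ^ 2)) := by fun_prop
  have h : gaussTail = fun w => gaussTail 0 - ∫ z in (0 : ℝ)..w, exp (-z ^ 2) := by
    funext w
    have := intervalIntegral.integral_interval_add_Ioi (a := 0) (b := w)
      hi.integrableOn hi.integrableOn
    simp only [gaussTail]
    linarith
  rw [h]
  exact (hc.integral_hasStrictDerivAt 0 w).hasDerivAt.const_sub _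

/-- Affine change of variables for the Gaussian tail. -/
lemma integral_Ioi_exp_affine (r c : ℝ) {s : ℝ} (hs : 0 < s) :
    ∫ η in Set.Ioi r, exp (-((η - c) / s) ^ 2) = s * gaussTail ((r - c) / s) := by
  have h1 := integral_comp_mul_left_Ioi (fun z => exp (-(z - s⁻¹ * c) ^ 2)) r (inv_pos.2 hs)
  have h2 := (measurePreserving_sub_right volume (s⁻¹ * c)).setIntegral_preimage_emb
    (measurableEmbedding_subRight (s⁻¹ * c)) (fun z => exp (-z ^ 2)) (Set.Ioi ((r - c) / s))
  have h3 : (fun z => z - s⁻¹ * c) ⁻¹' Set.Ioi ((r - c) / s) = Set.Ioi (s⁻¹ * r) := by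
    ext z
    simp only [Set.mem_preimage, Set.mem_Ioi]
    rw [lt_sub_iff_add_lt, show (r - c) / s + s⁻¹ * c = s⁻¹ * r by field_simp; ring]
  rw [h3] at h2
  rw [inv_inv, smul_eq_mul] at h1
  rw [gaussTail, ← h2, ← h1]
  congr 1
  funext η
  congr 3
  field_simp

/-- Completing the square in `η` turns the exponentially weighted integral of the kernel into a
Gaussian tail. -/
lemma integral_exp_mul_U {D : ℝ} (ν k r x : ℝ) {t : ℝ} (hD : 0 < D) (ht : 0 < t) :
    ∫ η in Set.Ici r, exp (k * (η - r)) * U D ν x t η =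
      (√π)⁻¹ * (exp (k * (x - r - ν * t) + D * k ^ 2 * t) *
        gaussTail ((r - x + ν * t - 2 * D * k * t) / √(4 * D * t))) := by
  have hs : 0 < √(4 * D * t) := by positivity
  have hsq : √(4 * D * t) ^ 2 = 4 * D * t := Real.sq_sqrt (by positivity)
  have h := integral_Ioi_exp_affine r (x - ν * t + 2 * D * k * t) hs
  have hpt : ∀ η, exp (k * (η - r)) * U D ν x t η =
      ((√π)⁻¹ * (√(4 * D * t))⁻¹ * exp (k * (x - r - ν * t) + D * k ^ 2 * t)) *
        exp (-((η - (x - ν * t + 2 * D * k * t)) / √(4 * D * t)) ^ 2) := by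
    intro η
    have he : exp (k * (η - r)) * exp (-((x - η - ν * t) / √(4 * D * t)) ^ 2) =
        exp (k * (x - r - ν * t) + D * k ^ 2 * t) *
          exp (-((η - (x - ν * t + 2 * D * k * t)) / √(4 * D * t)) ^ 2) := by
      rw [← exp_add, ← exp_add]
      congr 1
      rw [div_pow, div_pow, hsq]
      field_simp
      ring
    rw [U_eq ν x η hD ht]
    linear_combination (√π)⁻¹ * (√(4 * D * t))⁻¹ * he
  simp only [hpt]
  rw [integral_Ici_eq_integral_Ioi, integral_const_mul, h,
    show r - (x - ν * t + 2 * D * k * t) = r - x + ν * t - 2 * D * k * t by ring]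
  field_simp

lemma solvesFP_tail {D : ℝ} (ν k r : ℝ) (hD : 0 < D) :
    SolvesFP D ν (fun x t => exp (k * (x - r - ν * t) + D * k ^ 2 * t) *
      gaussTail ((r - x + ν * t - 2 * D * k * t) / √(4 * D * t))) := by
  refine ⟨fun x t => exp (k * (x - r - ν * t) + D * k ^ 2 * t) * (k * (-ν) + D * k ^ 2) *
        gaussTail ((r - x + ν * t - 2 * D * k * t) / √(4 * D * t)) +
      exp (k * (x - r - ν * t) + D * k ^ 2 * t) *
        (-exp (-((r - x + ν * t - 2 * D * k * t) / √(4 * D * t)) ^ 2) *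
        (((ν - 2 * D * k) * √(4 * D * t) -
          (r - x + ν * t - 2 * D * k * t) * (2 * D / √(4 * D * t))) / √(4 * D * t) ^ 2)),
    fun x t => exp (k * (x - r - ν * t) + D * k ^ 2 * t) * k *
        gaussTail ((r - x + ν * t - 2 * D * k * t) / √(4 * D * t)) +
      exp (k * (x - r - ν * t) + D * k ^ 2 * t) *
        (-exp (-((r - x + ν * t - 2 * D * k * t) / √(4 * D * t)) ^ 2) * (-1 / √(4 * D * t))),
    fun x t => (exp (k * (x - r - ν * t) + D * k ^ 2 * t) * k * k *
        gaussTail ((r - x + ν * t - 2 * D * k * t) / √(4 * D * t)) +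
      exp (k * (x - r - ν * t) + D * k ^ 2 * t) * k *
        (-exp (-((r - x + ν * t - 2 * D * k * t) / √(4 * D * t)) ^ 2) * (-1 / √(4 * D * t)))) +
      (exp (k * (x - r - ν * t) + D * k ^ 2 * t) * k *
        (-exp (-((r - x + ν * t - 2 * D * k * t) / √(4 * D * t)) ^ 2) * (-1 / √(4 * D * t))) +
      exp (k * (x - r - ν * t) + D * k ^ 2 * t) *
        (-(exp (-((r - x + ν * t - 2 * D * k * t) / √(4 * D * t)) ^ 2) *
          (-(2 * ((r - x + ν * t - 2 * D * k * t) / √(4 * D * t)) * (-1 / √(4 * D * t))))) *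
          (-1 / √(4 * D * t)))),
    fun x t ht => ?_⟩
  have hs : 0 < √(4 * D * t) := by positivity
  have hds := hasDerivAt_sqrt_four_mul hD ht
  have hwx : HasDerivAt (fun y => (r - y + ν * t - 2 * D * k * t) / √(4 * D * t))
      (-1 / √(4 * D * t)) x :=
    ((((hasDerivAt_id x).const_sub r).add_const (ν * t)).sub_const (2 * D * k * t)).div_const _
  have hnt : HasDerivAt (fun τ => r - x + ν * τ - 2 * D * k * τ) (ν - 2 * D * k) t := by
    refine ((((hasDerivAt_id t).const_mul ν).const_add (r - x)).sub
      ((hasDerivAt_id t).const_mul (2 * D * k))).congr_deriv ?_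
    simp
  have hwt := hnt.div hds hs.ne'
  have hEx : HasDerivAt (fun y => exp (k * (y - r - ν * t) + D * k ^ 2 * t))
      (exp (k * (x - r - ν * t) + D * k ^ 2 * t) * k) x := by
    simpa using (((((hasDerivAt_id x).sub_const r).sub_const (ν * t)).const_mul k).add_const
      (D * k ^ 2 * t)).exp
  have hEt : HasDerivAt (fun τ => exp (k * (x - r - ν * τ) + D * k ^ 2 * τ))
      (exp (k * (x - r - ν * t) + D * k ^ 2 * t) * (k * (-ν) + D * k ^ 2)) t := by
    refine (((((hasDerivAt_id t).const_mul ν).const_sub (x - r)).const_mul k).add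
      ((hasDerivAt_id t).const_mul (D * k ^ 2))).exp.congr_deriv ?_
    simp
  have hGx := (hasDerivAt_gaussTail _).comp x hwx
  have hGt := (hasDerivAt_gaussTail _).comp t hwt
  refine ⟨hEt.mul hGt, hEx.mul hGx, ?_, ?_⟩
  · refine (((hEx.mul_const k).mul hGx).add
      (hEx.mul ((((hwx.pow 2).neg).exp.neg).mul_const (-1 / √(4 * D * t))))).congr_deriv ?_
    simp
  · have hst : t = √(4 * D * t) ^ 2 / (4 * D) := by
      rw [Real.sq_sqrt (by positivity)]; field_simp
    generalize exp (-((r - x + ν * t - 2 * D * k * t) / √(4 * D * t)) ^ 2) = E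
    generalize gaussTail ((r - x + ν * t - 2 * D * k * t) / √(4 * D * t)) = G
    generalize exp (k * (x - r - ν * t) + D * k ^ 2 * t) = F
    -- all remaining dependence on `t` is rational in `s = √(4Dt)`
    generalize √(4 * D * t) = s at *
    subst hst
    field_simp
    ring

/-- For every `x ∈ ℝ` and `t > 0`, the Robin-boundary solution `p = p₁ + p₂ + p₃` satisfies
the Fokker–Planck equation `∂p/∂t = −ν ∂p/∂x + D ∂²p/∂x²`. -/
theorem pRobin_fokkerPlanck (D ν L x₀ α β : ℝ) (hD : 0 < D) (hx₀ : x₀ < L) (hβ : β ≠ 0) :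
    ∀ (x t : ℝ), 0 < t →
      deriv (fun τ => pRobin D ν L x₀ α β x τ) t =
        -ν * deriv (fun y => pRobin D ν L x₀ α β y t) x
          + D * deriv (deriv (fun y => pRobin D ν L x₀ α β y t)) x := by
  intro x t ht
  have h3 : SolvesFP D ν (p3 D ν L x₀ α β) :=
    ((solvesFP_tail ν (α / β) (2 * L - x₀) hD).const_mul (√π)⁻¹ |>.congr
      (g := fun x t => ∫ η in Set.Ici (2 * L - x₀),
        exp ((α / β) * (η - (2 * L - x₀))) * U D ν x t η)
      fun x t ht => integral_exp_mul_U ν (α / β) (2 * L - x₀) x hD ht).const_mul _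
  have h12 := (solvesFP_U ν x₀ hD).add
    ((solvesFP_U ν (2 * L - x₀) hD).const_mul (exp ((ν / D) * (L - x₀))))
  exact (h12.add h3).deriv_eq ht
end

section
/- For every R > 0, σ > 0 and θ > 0, the KDKMC diffusion coefficient is strictly positive: D(θ) = (σ²/(R²θ)) · (2e^{−Rθ} + Rθ + Rθe^{−Rθ} − 2) > 0. -/
/-!
The prefactor `σ²/(R²θ)` is positive, so with `x = Rθ > 0` the claim reduces to positivity of
`f x = 2e^{−x} + x + xe^{−x} − 2`. Since `f 0 = 0` and `f' x = 1 − (1 + x)e^{−x} > 0` for `x > 0`,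
`f` is strictly increasing on `[0, ∞)`, which gives `f x > 0` (`bracket_pos`).
-/

open Real

/-- The KDKMC diffusion coefficient
`D(θ) = (σ²/(R²θ)) (2e^{−Rθ} + Rθ + Rθe^{−Rθ} − 2)`. -/
noncomputable def Dkdkmc (R σ θ : ℝ) : ℝ :=
  (σ ^ 2 / (R ^ 2 * θ)) *
    (2 * Real.exp (-R * θ) + R * θ + R * θ * Real.exp (-R * θ) - 2)

/-- Positivity of the bracketed factor of `Dkdkmc`, written in the single variable `x = Rθ`. -/
lemma bracket_pos {x : ℝ} (hx : 0 < x) :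
    0 < 2 * Real.exp (-x) + x + x * Real.exp (-x) - 2 := by
  have hd : ∀ y : ℝ, HasDerivAt
      (fun y : ℝ => 2 * Real.exp (-y) + y + y * Real.exp (-y) - 2)
      (1 - (1 + y) * Real.exp (-y)) y := by
    intro y
    have he : HasDerivAt (fun y : ℝ => Real.exp (-y)) (Real.exp (-y) * -1) y :=
      (hasDerivAt_neg y).exp
    have h := (((he.const_mul 2).add (hasDerivAt_id y)).add
      ((hasDerivAt_id y).mul he)).sub_const 2
    refine h.congr_deriv ?_
    simp only [id]
    ring
  have hmono : StrictMonoOn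
      (fun y : ℝ => 2 * Real.exp (-y) + y + y * Real.exp (-y) - 2) (Set.Ici 0) := by
    refine strictMonoOn_of_deriv_pos (convex_Ici 0)
      (fun y _ => (hd y).continuousAt.continuousWithinAt) ?_
    intro y hy
    rw [interior_Ici, Set.mem_Ioi] at hy
    rw [(hd y).deriv]
    -- multiply `1 + y < e^y` by `e^{−y}`
    have h1 := Real.add_one_lt_exp hy.ne'
    have h2 : Real.exp y * Real.exp (-y) = 1 := by rw [← Real.exp_add]; simp
    nlinarith [Real.exp_pos (-y)]
  simpa using hmono Set.self_mem_Ici hx.le hx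

/-- For every `R > 0`, `σ > 0` and `θ > 0`, the KDKMC diffusion coefficient is
strictly positive. -/
theorem Dkdkmc_pos :
    ∀ (R σ θ : ℝ), 0 < R → 0 < σ → 0 < θ → 0 < Dkdkmc R σ θ := by
  intro R σ θ hR hσ hθ
  have h := bracket_pos (mul_pos hR hθ)
  rw [← neg_mul] at h
  exact mul_pos (by positivity) h
end

section
/- For every R > 0 and σ > 0, the KDKMC diffusion coefficient is strictly smaller than the fluid diffusion coefficient for every time step: D(θ) < σ²/R for all θ > 0, and D(θ) converges to the fluid diffusion coefficient σ²/R in the limit θ → ∞. -/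
/-!
With `x = Rθ`, one has `D(θ) = σ²/R - σ²/(R²θ) · (2 - (2 + x) e^{-x})`. The strict bound is
`(2 + x) e^{-x} < 2`, which follows from `1 + x ≤ e^x`. The bracket is also at most `2`, so
`σ²/R - 2σ²/(R²θ) ≤ D(θ) < σ²/R`, and the limit follows by squeezing.
-/

open Real Filter Topology

/-- Deviation of `D(θ)` from the fluid coefficient. -/
lemma Dkdkmc_eq_fluid_sub (R σ θ : ℝ) (hR : 0 < R) (hθ : 0 < θ) :
    Dkdkmc R σ θ =
      σ ^ 2 / R - σ ^ 2 / (R ^ 2 * θ) * (2 - (2 + R * θ) * Real.exp (-R * θ)) := by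
  unfold Dkdkmc
  field_simp
  ring

/-- For every `R > 0` and `σ > 0`, the KDKMC diffusion coefficient is strictly smaller than
the fluid diffusion coefficient `σ²/R` for every time step `θ > 0`, and converges to the
fluid diffusion coefficient as `θ → ∞`. -/
theorem Dkdkmc_lt_fluid_and_tendsto (R σ : ℝ) (hR : 0 < R) (hσ : 0 < σ) :
    (∀ θ : ℝ, 0 < θ → Dkdkmc R σ θ < σ ^ 2 / R) ∧
      Tendsto (fun θ => Dkdkmc R σ θ) atTop (𝓝 (σ ^ 2 / R)) := by
  have hlt : ∀ θ : ℝ, 0 < θ → Dkdkmc R σ θ < σ ^ 2 / R := by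
    intro θ hθ
    rw [Dkdkmc_eq_fluid_sub R σ θ hR hθ]
    have hx : 0 < R * θ := mul_pos hR hθ
    -- `e^{-x} (1 + x) ≤ e^{-x} e^x = 1`, so `(2 + x) e^{-x} < (2 + 2x) e^{-x} ≤ 2`.
    have hprod : Real.exp (-R * θ) * Real.exp (R * θ) = 1 := by
      rw [← Real.exp_add]; simp
    have hle := mul_le_mul_of_nonneg_left (Real.add_one_le_exp (R * θ))
      (Real.exp_pos (-R * θ)).le
    have hpos := mul_pos hx (Real.exp_pos (-R * θ))
    have hgap : 0 < 2 - (2 + R * θ) * Real.exp (-R * θ) := by linarith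
    have hcoef : 0 < σ ^ 2 / (R ^ 2 * θ) := by positivity
    linarith [mul_pos hcoef hgap]
  refine ⟨hlt, ?_⟩
  have hlower : Tendsto (fun θ : ℝ => σ ^ 2 / R - σ ^ 2 / (R ^ 2 * θ) * 2) atTop
      (𝓝 (σ ^ 2 / R)) := by
    have hden : Tendsto (fun θ : ℝ => R ^ 2 * θ) atTop atTop :=
      tendsto_id.const_mul_atTop (by positivity)
    simpa using ((hden.const_div_atTop (σ ^ 2)).mul_const 2).const_sub (σ ^ 2 / R)
  refine tendsto_of_tendsto_of_tendsto_of_le_of_le' hlower tendsto_const_nhds ?_ ?_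
  · filter_upwards [eventually_gt_atTop 0] with θ hθ
    rw [Dkdkmc_eq_fluid_sub R σ θ hR hθ]
    have hnonneg : 0 ≤ σ ^ 2 / (R ^ 2 * θ) * ((2 + R * θ) * Real.exp (-R * θ)) := by
      positivity
    linarith
  · filter_upwards [eventually_gt_atTop 0] with θ hθ
    exact (hlt θ hθ).le
end

section
/- For every R > 0 and σ > 0, the KDKMC diffusion coefficient vanishes in the kinetic limit of small time steps, with the precise rate lim_{θ → 0⁺} D(θ)/θ² = σ²R/6; in particular D(θ) → 0 as θ → 0⁺. -/
/-!
With `y = -Rθ`, one has `D(θ)/θ² = -σ²R · B(y)/y³`, where `B(y) = 2eʸ - y - y eʸ - 2`.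
Inserting the third-order Taylor expansion of `eʸ` cancels every term of `B` of order below
three and leaves `B(y) = -y³/6 + o(y³)`, which gives the rate. The limit of `D` itself follows
by multiplying back by `θ² → 0`.
-/

open Real Filter Topology

/-- The third-order behaviour at the origin of the bracket in `Dkdkmc`, with `y = -Rθ`. -/
lemma tendsto_bracket_div_cube :
    Tendsto (fun y : ℝ => (2 * Real.exp y - y - y * Real.exp y - 2) / y ^ 3)
      (𝓝[≠] 0) (𝓝 (-1 / 6)) := by
  have hr := ((Real.exp_sub_sum_range_succ_isLittleO_pow 3).tendsto_div_nhds_zero).mono_left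
    (nhdsWithin_le_nhds (s := {0}ᶜ))
  have hy : Tendsto (fun y : ℝ => y) (𝓝[≠] 0) (𝓝 0) := tendsto_id.mono_left nhdsWithin_le_nhds
  have h := ((hy.div_const 6).const_sub (-1 / 6)).add ((hy.const_sub 2).mul hr)
  rw [show (-1 / 6 - 0 / 6 + (2 - 0) * 0 : ℝ) = -1 / 6 by norm_num] at h
  refine h.congr' ?_
  filter_upwards [self_mem_nhdsWithin] with y hy0
  have hy0 : y ≠ 0 := hy0
  simp only [Finset.sum_range_succ, Finset.sum_range_zero, Nat.factorial]
  push_cast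
  field_simp
  ring

/-- For every `R > 0` and `σ > 0`, the KDKMC diffusion coefficient vanishes in the kinetic
limit of small time steps, with the precise rate `lim_{θ → 0⁺} D(θ)/θ² = σ²R/6`; in
particular `D(θ) → 0` as `θ → 0⁺`. -/
theorem Dkdkmc_small_timestep_limit (R σ : ℝ) (hR : 0 < R) (hσ : 0 < σ) :
    Tendsto (fun θ => Dkdkmc R σ θ / θ ^ 2) (𝓝[>] 0) (𝓝 (σ ^ 2 * R / 6)) ∧
      Tendsto (fun θ => Dkdkmc R σ θ) (𝓝[>] 0) (𝓝 0) := by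
  have hlin : Tendsto (fun θ : ℝ => -R * θ) (𝓝[>] 0) (𝓝[≠] 0) := by
    refine tendsto_nhdsWithin_iff.2 ⟨?_, ?_⟩
    · exact ((continuous_const_mul (-R)).tendsto' 0 0 (by simp)).mono_left nhdsWithin_le_nhds
    · filter_upwards [self_mem_nhdsWithin] with θ hθ
      exact mul_ne_zero (neg_ne_zero.2 hR.ne') (ne_of_gt hθ)
  have hrate : Tendsto (fun θ => Dkdkmc R σ θ / θ ^ 2) (𝓝[>] 0) (𝓝 (σ ^ 2 * R / 6)) := by
    have h := (tendsto_bracket_div_cube.comp hlin).const_mul (-(σ ^ 2 * R))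
    rw [show -(σ ^ 2 * R) * (-1 / 6) = σ ^ 2 * R / 6 by ring] at h
    refine h.congr' ?_
    filter_upwards [self_mem_nhdsWithin] with θ hθ
    have hθ0 : θ ≠ 0 := ne_of_gt hθ
    have hR0 : R ≠ 0 := hR.ne'
    simp only [Function.comp_apply, Dkdkmc]
    generalize Real.exp (-R * θ) = E
    field_simp
    ring
  refine ⟨hrate, ?_⟩
  have hsq : Tendsto (fun θ : ℝ => θ ^ 2) (𝓝[>] 0) (𝓝 0) :=
    ((continuous_pow 2).tendsto' 0 0 (by simp)).mono_left nhdsWithin_le_nhds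
  have h := hrate.mul hsq
  rw [mul_zero] at h
  refine h.congr' ?_
  filter_upwards [self_mem_nhdsWithin] with θ hθ
  exact div_mul_cancel₀ _ (pow_ne_zero 2 (ne_of_gt hθ))
end
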